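/- Let Ω ⊂ ℝ^d be a C^{1,Dini} domain, B a ball centered on ∂Ω, and Σ = B ∩ ∂Ω. Let u be a harmonic function in Ω, continuous on Ω̄, vanishing on Σ. Then 𝒮_Σ(u) = 𝒮'_Σ(u), where 𝒮_Σ(u) = {x ∈ Σ : |∇u(x)| = 0} (which is well defined since ∇u extends continuously up to Σ in C^{1,Dini} domains) and 𝒮'_Σ(u) = {x ∈ Σ : u⁻¹({0}) ∩ B(x,r) ∩ Ω ≠ ∅ for all r > 0}. -/

import Mathlib

/-!
Fix `x ∈ Σ` and the local graph `⟪y, e⟫ = f y` of the boundary; let `g` be the limit of `∇u` at `x`.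

If `g ≠ 0`, then `⟪g, e⟫ ≠ 0` because `u` vanishes along the graph, so `u` is strictly monotone in
the direction `e` near `x` and cannot vanish in `Ω` there (`ne_zero_near_of_gradient_ne_zero`).

If `g = 0` and `u` had no zeros in `Ω` near `x`, then `u` would have a constant sign, say positive,
on the region `‖z‖ ω(‖z‖) < ⟪z, ν⟫`, where `z` is measured from `x`, `ν` is the inner normal and `ω`
is a Dini modulus; this region lies in `Ω` by the first-order expansion of `f`. The Hopf lemma for
Dini regions (`hopf_dini`) then gives `u (x + t ν) ≥ c t` for arbitrarily small `t`, contradicting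
`∇u → 0`. The Hopf lemma is proved by iterating over the scales `R = r / 4 ^ k`: if
`u ≥ m (⟪z, ν⟫ - δ)` in the ball of radius `R` with `δ ≈ R ω(R)`, comparing with an explicit
strictly superharmonic quadratic polynomial in half balls yields the same bound in the quarter ball
with the next, smaller `δ` and with `m` replaced by `m (1 - C ω)` (`hopf_step`). The Dini condition
is the summability of these losses, so the slopes stay bounded below.
-/

open MeasureTheory Metric Set Filter Topology
open scoped ENNReal NNReal Topology

local notation "⟪" x ", " y "⟫" => @inner ℝ _ _ x y

noncomputable section

abbrev Euc (d : ℕ) : Type := EuclideanSpace ℝ (Fin d)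

variable {d : ℕ}

/-- `A` is symmetric on `s`. -/
def IsSymmOn (A : Euc d → (Euc d →L[ℝ] Euc d)) (s : Set (Euc d)) : Prop :=
  ∀ x ∈ s, ∀ v w : Euc d, ⟪A x v, w⟫ = ⟪v, A x w⟫

/-- `A` is uniformly elliptic with constant `Λ` on `s`. -/
def IsEllipticOn (A : Euc d → (Euc d →L[ℝ] Euc d)) (Λ : ℝ) (s : Set (Euc d)) : Prop :=
  ∀ x ∈ s, ∀ v : Euc d, Λ⁻¹ * ‖v‖ ^ 2 ≤ ⟪A x v, v⟫ ∧ ⟪A x v, v⟫ ≤ Λ * ‖v‖ ^ 2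

/-- `A` has Lipschitz coefficients with constant `L` on `s`. -/
def IsLipCoeffOn (A : Euc d → (Euc d →L[ℝ] Euc d)) (L : ℝ) (s : Set (Euc d)) : Prop :=
  ∀ x ∈ s, ∀ y ∈ s, ‖A x - A y‖ ≤ L * ‖x - y‖

/-- `u` is a weak solution of `div (A ∇u) = 0` on `Ω`. -/
def IsWeakSol (A : Euc d → (Euc d →L[ℝ] Euc d)) (u : Euc d → ℝ) (Ω : Set (Euc d)) : Prop :=
  ∀ φ : Euc d → ℝ, ContDiff ℝ 1 φ → HasCompactSupport φ → tsupport φ ⊆ Ω →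
    ∫ x in Ω, ⟪A x (gradient u x), gradient φ x⟫ = 0

/-- `Ω` is a Lipschitz domain. -/
def IsLipschitzDomain (Ω : Set (Euc d)) : Prop :=
  IsOpen Ω ∧ Ω.Nonempty ∧
    ∀ x ∈ frontier Ω, ∃ (r L : ℝ) (e : Euc d) (f : Euc d → ℝ),
      0 < r ∧ 0 ≤ L ∧ ‖e‖ = 1 ∧ LipschitzWith (Real.toNNReal L) f ∧
      (∀ y z : Euc d, y - ⟪y, e⟫ • e = z - ⟪z, e⟫ • e → f y = f z) ∧
      (∀ y ∈ ball x r, (y ∈ Ω ↔ f y < ⟪y, e⟫))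

/-- Inside `B`, the boundary of `Ω` is the graph of a `τ`-Lipschitz function in the unit
direction `e`, and `Ω ∩ B` is the region above the graph. -/
def IsGraphPiece (Ω B : Set (Euc d)) (τ : ℝ) (e : Euc d) : Prop :=
  ‖e‖ = 1 ∧ ∃ f : Euc d → ℝ,
    LipschitzWith (Real.toNNReal τ) f ∧
    (∀ y z : Euc d, y - ⟪y, e⟫ • e = z - ⟪z, e⟫ • e → f y = f z) ∧
    (∀ y ∈ B, (y ∈ Ω ↔ f y < ⟪y, e⟫)) ∧
    (∀ y ∈ B, (y ∈ frontier Ω ↔ ⟪y, e⟫ = f y))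

/-- The weight `μ_x(y) = (A(y)(y-x), y-x)/|y-x|²`. -/
def muWt (A : Euc d → (Euc d →L[ℝ] Euc d)) (x y : Euc d) : ℝ :=
  ⟪A y (y - x), y - x⟫ / ‖y - x‖ ^ 2

/-- `H(x,r) = r^{1-d} ∫_{∂B(x,r)} μ_x |u|² dσ`. -/
def freqH (A : Euc d → (Euc d →L[ℝ] Euc d)) (u : Euc d → ℝ) (x : Euc d) (r : ℝ) : ℝ :=
  r ^ ((1 : ℝ) - d) * ∫ y in sphere x r, muWt A x y * u y ^ 2 ∂μH[(d : ℝ) - 1]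

/-- `I(x,r) = r^{1-d} ∫_{B(x,r)∩Ω} (A∇u, ∇u)`. -/
def freqI (A : Euc d → (Euc d →L[ℝ] Euc d)) (u : Euc d → ℝ) (Ω : Set (Euc d))
    (x : Euc d) (r : ℝ) : ℝ :=
  r ^ ((1 : ℝ) - d) * ∫ y in ball x r ∩ Ω, ⟪A y (gradient u y), gradient u y⟫

/-- The Almgren frequency `N(x,r) = r I(x,r) / H(x,r)`. -/
def freqN (A : Euc d → (Euc d →L[ℝ] Euc d)) (u : Euc d → ℝ) (Ω : Set (Euc d))
    (x : Euc d) (r : ℝ) : ℝ :=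
  r * freqI A u Ω x r / freqH A u x r

/-- `S` is a symmetric positive square root of `T`. -/
def IsPosSqrt (S T : Euc d →L[ℝ] Euc d) : Prop :=
  (∀ v w : Euc d, ⟪S v, w⟫ = ⟪v, S w⟫) ∧ (∀ v : Euc d, 0 ≤ ⟪S v, v⟫) ∧ S ∘L S = T

/-- The transformed matrix `A_S(y) = S⁻¹ A(x + S y) S⁻¹`. -/
def transA (A : Euc d → (Euc d →L[ℝ] Euc d)) (x : Euc d) (S : Euc d →L[ℝ] Euc d) :
    Euc d → (Euc d →L[ℝ] Euc d) := fun y =>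
  (Ring.inverse S) ∘L ((A (x + S y)) ∘L (Ring.inverse S))

/-- `H` at a general point, via the change of variables `y ↦ x + S y` normalizing `A x` to the
identity (`S` a positive square root of `A x`). -/
def freqHGen (A : Euc d → (Euc d →L[ℝ] Euc d)) (u : Euc d → ℝ)
    (x : Euc d) (S : Euc d →L[ℝ] Euc d) (r : ℝ) : ℝ :=
  freqH (transA A x S) (fun y => u (x + S y)) 0 r

/-- The Almgren frequency at a general point, via the change of variables `y ↦ x + S y`
normalizing `A x` to the identity (`S` a positive square root of `A x`). -/
def freqNGen (A : Euc d → (Euc d →L[ℝ] Euc d)) (u : Euc d → ℝ) (Ω : Set (Euc d))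
    (x : Euc d) (S : Euc d →L[ℝ] Euc d) (r : ℝ) : ℝ :=
  freqN (transA A x S) (fun y => u (x + S y)) {y | x + S y ∈ Ω} 0 r

/-- Upper Minkowski dimension via dyadic cube counting. -/
def upMinkDim (s : Set (Euc d)) : ℝ :=
  Filter.limsup (fun j : ℕ =>
    Real.log ((Set.ncard {c : Fin d → ℤ | ∃ x ∈ s, ∀ i,
      (c i : ℝ) ≤ 2 ^ j * x i ∧ 2 ^ j * x i < (c i : ℝ) + 1} : ℕ) : ℝ) /
      (j * Real.log 2)) Filter.atTop

/-- The vanishing order of `u` at `x`. -/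
def vanishOrder (u : Euc d → ℝ) (Ω : Set (Euc d)) (x : Euc d) : ℝ :=
  sSup {α : ℝ | 0 < α ∧ ∃ C > (0:ℝ), ∃ r₀ > (0:ℝ), ∀ r : ℝ, 0 < r → r ≤ r₀ →
    (⨍ y in ball x r ∩ Ω, |u y|) ≤ C * r ^ α}

/-- `ν` is an outer unit normal of `Ω` at the boundary point `x`. -/
def IsOuterNormalAt (Ω : Set (Euc d)) (x ν : Euc d) : Prop :=
  ‖ν‖ = 1 ∧ ∀ a : ℝ, 0 < a → a < 1 → ∃ r > (0:ℝ),
    (∀ y ∈ ball x r, a * ‖y - x‖ < ⟪x - y, ν⟫ → y ∈ Ω) ∧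
    (∀ y ∈ ball x r, a * ‖y - x‖ < ⟪y - x, ν⟫ → y ∉ closure Ω)

/-- `θ` is a Dini modulus of continuity: a nonnegative, vanishing-at-zero, monotone modulus
with `∫₀ θ(t)/t dt < ∞`. -/
def IsDiniModulus (θ : ℝ → ℝ) : Prop :=
  (∀ t, 0 ≤ θ t) ∧ θ 0 = 0 ∧ MonotoneOn θ (Ici (0 : ℝ)) ∧
    ContinuousWithinAt θ (Ici (0 : ℝ)) 0 ∧
    ∃ δ : ℝ, 0 < δ ∧ IntegrableOn (fun t => θ t / t) (Ioc (0 : ℝ) δ)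

/-- `Ω` is a `C^{1,Dini}` domain: near every boundary point it is the region above the graph of
a `C¹` function whose gradient has a Dini modulus of continuity. -/
def IsC1DiniDomain {d : ℕ} (Ω : Set (Euc d)) : Prop :=
  IsOpen Ω ∧ Ω.Nonempty ∧
    ∀ x ∈ frontier Ω, ∃ (r : ℝ) (e : Euc d) (f : Euc d → ℝ) (θ : ℝ → ℝ),
      0 < r ∧ ‖e‖ = 1 ∧ IsDiniModulus θ ∧
      (∀ y z : Euc d, y - ⟪y, e⟫ • e = z - ⟪z, e⟫ • e → f y = f z) ∧
      Differentiable ℝ f ∧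
      (∀ y z : Euc d, ‖fderiv ℝ f y - fderiv ℝ f z‖ ≤ θ ‖y - z‖) ∧
      (∀ y ∈ ball x r, (y ∈ Ω ↔ f y < ⟪y, e⟫)) ∧
      (∀ y ∈ ball x r, (y ∈ frontier Ω ↔ ⟪y, e⟫ = f y))

/-- `u` is harmonic on `Ω`. -/
def IsHarmonicOn {d : ℕ} (u : Euc d → ℝ) (Ω : Set (Euc d)) : Prop :=
  ContDiffOn ℝ 2 u Ω ∧
    ∀ x ∈ Ω, (∑ i : Fin d,
      fderiv ℝ (fun y => fderiv ℝ u y (EuclideanSpace.single i (1 : ℝ))) x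
        (EuclideanSpace.single i (1 : ℝ))) = 0

/-! ### Comparison principle -/

lemma deriv_deriv_nonneg_of_isLocalMin {g : ℝ → ℝ} {x : ℝ} (h : IsLocalMin g x)
    (hc : ContinuousAt g x) : 0 ≤ deriv (deriv g) x := by
  by_contra! hneg
  have hmax := isLocalMax_of_deriv_deriv_neg hneg h.deriv_eq_zero hc
  -- both a local minimum and a local maximum, hence locally constant
  have hconst : g =ᶠ[𝓝 x] fun _ => g x := by
    filter_upwards [h, hmax] with y h1 h2 using le_antisymm h2 h1
  have h1 : deriv g =ᶠ[𝓝 x] fun _ => 0 := by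
    filter_upwards [hconst.eventually_nhds] with y hy
    rw [Filter.EventuallyEq.deriv_eq hy]; simp
  rw [h1.deriv_eq] at hneg
  simp at hneg

/-- A harmonic function plus a quadratic polynomial of negative Laplacian has no local minimum.
The polynomial enters through its Taylor expansion along the coordinate axes: `Q i` is half of its
second derivative in direction `i`. -/
lemma not_isLocalMin_harmonic_add {u : Euc d → ℝ} {Ω : Set (Euc d)} (hΩ : IsOpen Ω)
    (hu : IsHarmonicOn u Ω) {z : Euc d} (hz : z ∈ Ω) (P : Euc d → ℝ) (L Q : Fin d → ℝ)
    (hP : ∀ i t, P (z + t • EuclideanSpace.single i (1 : ℝ)) = P z + L i * t + Q i * t ^ 2)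
    (hQ : ∑ i, Q i < 0) : ¬ IsLocalMin (fun y => u y + P y) z := by
  intro hmin
  have hnonneg : ∀ i : Fin d, 0 ≤
      fderiv ℝ (fun y => fderiv ℝ u y (EuclideanSpace.single i (1 : ℝ))) z
        (EuclideanSpace.single i (1 : ℝ)) + 2 * Q i := by
    intro i
    set v : Euc d := EuclideanSpace.single i (1 : ℝ) with hv
    have hline : ∀ t : ℝ, HasDerivAt (fun t : ℝ => z + t • v) v t := fun t => by
      simpa using ((hasDerivAt_id t).smul_const v).const_add z
    have hcont : ContinuousAt (fun t : ℝ => z + t • v) 0 := (hline 0).continuousAt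
    have hzero : z + (0 : ℝ) • v = z := by simp
    set g : ℝ → ℝ := fun t => u (z + t • v) + P (z + t • v) with hg
    have hg2 : g = fun t => u (z + t • v) + (P z + L i * t + Q i * t ^ 2) := by
      funext t; simp only [hg, hv, hP]
    have hgmin : IsLocalMin g 0 := by
      have : ∀ᶠ t in 𝓝 (0 : ℝ), u z + P z ≤ u (z + t • v) + P (z + t • v) := by
        have h0 := hcont.tendsto
        simp only [zero_smul, add_zero] at h0
        exact h0.eventually hmin
      simpa [IsLocalMin, IsMinFilter, hg] using this
    have hmem : ∀ᶠ t in 𝓝 (0 : ℝ), z + t • v ∈ Ω := by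
      have := hcont.eventually_mem (by rw [hzero]; exact hΩ.mem_nhds hz)
      exact this
    have hdiff : ∀ᶠ t in 𝓝 (0 : ℝ),
        HasDerivAt g (fderiv ℝ u (z + t • v) v + (L i + Q i * (2 * t))) t := by
      filter_upwards [hmem] with t ht
      have h1 : DifferentiableAt ℝ u (z + t • v) :=
        (hu.1.contDiffAt (hΩ.mem_nhds ht)).differentiableAt (by norm_num)
      have h2 := h1.hasFDerivAt.comp_hasDerivAt t (hline t)
      have h3 : HasDerivAt (fun t : ℝ => P z + L i * t + Q i * t ^ 2)
          (L i + Q i * (2 * t)) t := by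
        have := (((hasDerivAt_id t).const_mul (L i)).const_add (P z)).fun_add
          (((hasDerivAt_id t).pow 2).const_mul (Q i))
        simpa using this
      rw [hg2]
      exact h2.add h3
    have hderiv : deriv g =ᶠ[𝓝 0]
        fun t => fderiv ℝ u (z + t • v) v + (L i + Q i * (2 * t)) := by
      filter_upwards [hdiff] with t ht using ht.deriv
    have hsecond : HasDerivAt (fun t : ℝ => fderiv ℝ u (z + t • v) v + (L i + Q i * (2 * t)))
        (fderiv ℝ (fun y => fderiv ℝ u y v) z v + 2 * Q i) 0 := by
      have h1 : DifferentiableAt ℝ (fun y => fderiv ℝ u y v) z := by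
        have : ContDiffAt ℝ 1 (fderiv ℝ u) z :=
          (hu.1.contDiffAt (hΩ.mem_nhds hz)).fderiv_right (by norm_num)
        exact (this.differentiableAt (by norm_num)).clm_apply (differentiableAt_const v)
      have h1' : HasFDerivAt (fun y => fderiv ℝ u y v)
          (fderiv ℝ (fun y => fderiv ℝ u y v) z) (z + (0 : ℝ) • v) := by
        rw [hzero]; exact h1.hasFDerivAt
      have h2 := h1'.comp_hasDerivAt 0 (hline 0)
      have h3 : HasDerivAt (fun t : ℝ => L i + Q i * (2 * t)) (2 * Q i) 0 := by
        have := (((hasDerivAt_id (0 : ℝ)).const_mul 2).const_mul (Q i)).const_add (L i)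
        simpa [mul_comm] using this
      exact h2.add h3
    have h0 := deriv_deriv_nonneg_of_isLocalMin hgmin hdiff.self_of_nhds.continuousAt
    rwa [hderiv.deriv_eq, hsecond.deriv] at h0
  have hsum := Finset.sum_nonneg fun i (_ : i ∈ Finset.univ) => hnonneg i
  rw [Finset.sum_add_distrib, hu.2 z hz, ← Finset.mul_sum] at hsum
  linarith

/-! ### The Hopf lemma at a boundary point of Dini type -/

/-- One step of the Hopf iteration. A lower bound of `u` by the linear function of slope `m`
vanishing at height `δ`, valid in the ball of radius `R`, becomes in the quarter ball a bound by a
linear function vanishing at the lower height `δ'`, at the price of a factor `1 - O(δ / R)` in the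
slope. -/
lemma hopf_step {u : Euc d → ℝ} {Ω : Set (Euc d)} (hΩ : IsOpen Ω) (hu : IsHarmonicOn u Ω)
    (x ν : Euc d) (hν : ‖ν‖ = 1) {R δ δ' m : ℝ} (hδ : 0 < δ) (hδ' : 0 < δ')
    (hm : 0 < m)
    (hpos : ∀ z, ‖z - x‖ < R → δ' ≤ ⟪z - x, ν⟫ → z ∈ Ω ∧ 0 ≤ u z)
    (hlow : ∀ z, ‖z - x‖ < R → δ ≤ ⟪z - x, ν⟫ → m * (⟪z - x, ν⟫ - δ) ≤ u z) :
    ∀ z, ‖z - x‖ < R / 4 → δ' ≤ ⟪z - x, ν⟫ →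
      m * (1 - 2 * (d + 1) * δ / R) * (⟪z - x, ν⟫ - δ') ≤ u z := by
  intro z₀ hz₀ hz₀'
  have hR : 0 < R := by linarith [norm_nonneg (z₀ - x)]
  have hinner_le : ∀ w : Euc d, ⟪w, ν⟫ ≤ ‖w‖ := fun w => by
    simpa [hν] using real_inner_le_norm w ν
  have hνν : ⟪ν, ν⟫ = (1 : ℝ) := by rw [real_inner_self_eq_norm_sq, hν]; norm_num
  set q : Euc d → ℝ := fun z => ⟪z - x, ν⟫ - δ' with hq
  set ρ : ℝ := R / 2 with hρ
  have hρ0 : 0 < ρ := by positivity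
  -- the foot of `z₀` on the hyperplane `q = 0`
  set a : Euc d := z₀ - q z₀ • ν with ha
  have hq₀ : 0 ≤ q z₀ := by simp only [hq]; linarith
  have hq₀' : q z₀ ≤ R / 4 := by
    simp only [hq]; linarith [hinner_le (z₀ - x)]
  have hz₀a : ‖z₀ - a‖ = q z₀ := by
    simp [ha, norm_smul, hν, abs_of_nonneg hq₀]
  have hqa : q a = 0 := by
    simp only [hq, ha]
    rw [sub_right_comm, inner_sub_left, inner_smul_left, hνν]
    simp
  have hax : ‖a - x‖ < R / 2 := by
    have : ‖a - x‖ ≤ ‖z₀ - x‖ + ‖z₀ - a‖ := by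
      have := norm_sub_le (z₀ - x) (z₀ - a)
      rwa [sub_sub_sub_cancel_left] at this
    linarith
  have hq_le : ∀ z, q z ≤ ‖z - a‖ := fun z => by
    have h1 : q z = ⟪z - a, ν⟫ := by
      have : q z - q a = ⟪z - a, ν⟫ := by
        simp only [hq]
        rw [sub_sub_sub_cancel_right, ← inner_sub_left, sub_sub_sub_cancel_right]
      rw [← this, hqa, sub_zero]
    rw [h1]; exact hinner_le _
  set K : ℝ := m * δ / ρ ^ 2 with hK
  have hK0 : 0 < K := by positivity
  -- a strictly superharmonic quadratic polynomial, nonnegative on the flat part of the boundary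
  -- of the half ball and at least `ρ ^ 2` on the spherical part
  set h : Euc d → ℝ := fun z => ‖z - a‖ ^ 2 - (d + 1) * q z ^ 2 + (d + 1) * ρ * q z with hh
  set P : Euc d → ℝ := fun z => -m * q z + K * h z with hPdef
  set V : Set (Euc d) := closedBall a ρ ∩ {z | 0 ≤ q z} with hV
  have hqc : Continuous q := by simp only [hq]; fun_prop
  have hhc : Continuous h := by simp only [hh]; fun_prop
  have hPc : Continuous P := by simp only [hPdef]; fun_prop
  have hVR : ∀ z ∈ V, ‖z - x‖ < R := by
    rintro z ⟨hz, -⟩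
    rw [mem_closedBall, dist_eq_norm] at hz
    have : ‖z - x‖ ≤ ‖z - a‖ + ‖a - x‖ := norm_sub_le_norm_sub_add_norm_sub z a x
    linarith
  have hVq : ∀ z ∈ V, δ' ≤ ⟪z - x, ν⟫ := by
    rintro z ⟨-, hz⟩
    simp only [hq, mem_ofPred_eq] at hz; linarith
  have hVΩ : V ⊆ Ω := fun z hz => (hpos z (hVR z hz) (hVq z hz)).1
  have hVc : IsCompact V :=
    (isCompact_closedBall a ρ).inter_right (isClosed_le continuous_const hqc)
  have hz₀V : z₀ ∈ V := by
    refine ⟨?_, hq₀⟩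
    rw [mem_closedBall, dist_eq_norm, hz₀a]; linarith
  obtain ⟨z, hzV, hzmin⟩ := hVc.exists_isMinOn ⟨z₀, hz₀V⟩
    (f := fun y => u y + P y) ((hu.1.continuousOn.mono hVΩ).add hPc.continuousOn)
  have hFz : 0 ≤ u z + P z := by
    have huz : 0 ≤ u z := (hpos z (hVR z hzV) (hVq z hzV)).2
    have hqz : 0 ≤ q z := hzV.2
    have hza : ‖z - a‖ ≤ ρ := by simpa [dist_eq_norm] using hzV.1
    rcases hqz.eq_or_lt with hq0 | hqpos
    · -- the minimum is on the flat part
      simp only [hPdef, hh, ← hq0]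
      have : 0 ≤ K * ‖z - a‖ ^ 2 := by positivity
      nlinarith
    rcases hza.eq_or_lt with hza | hza
    · -- the minimum is on the spherical part
      have hqρ : q z ≤ ρ := hza ▸ hq_le z
      have hhz : ρ ^ 2 ≤ h z := by
        simp only [hh, hza]
        have : 0 ≤ ((d : ℝ) + 1) * (q z * (ρ - q z)) := by
          have : 0 ≤ ρ - q z := by linarith
          positivity
        nlinarith
      have hKh : m * δ ≤ K * h z := by
        calc m * δ = K * ρ ^ 2 := by rw [hK]; field_simp
          _ ≤ K * h z := by gcongr
      have hqz' : ⟪z - x, ν⟫ = q z + δ' := by simp [hq]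
      rcases le_total δ ⟪z - x, ν⟫ with hle | hle
      · have := hlow z (hVR z hzV) hle
        simp only [hPdef]
        rw [hqz'] at this
        nlinarith
      · simp only [hPdef]
        rw [hqz'] at hle
        nlinarith
    · -- an interior minimum is impossible
      exfalso
      have hVnhds : V ∈ 𝓝 z := by
        filter_upwards [isOpen_ball.mem_nhds (show z ∈ ball a ρ by simpa [dist_eq_norm] using hza),
          (isOpen_lt continuous_const hqc).mem_nhds hqpos] with y h1 h2
        exact ⟨ball_subset_closedBall h1, le_of_lt h2⟩
      refine not_isLocalMin_harmonic_add hΩ hu (hVΩ hzV) P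
        (fun i => -m * ν i + K * (2 * (z - a) i - (d + 1) * (2 * q z * ν i) + (d + 1) * ρ * ν i))
        (fun i => K * (1 - (d + 1) * ν i ^ 2)) ?_ ?_ (hzmin.isLocalMin hVnhds)
      · intro i t
        set v : Euc d := EuclideanSpace.single i (1 : ℝ) with hv
        have hqv : q (z + t • v) = q z + t * ν i := by
          simp only [hq]
          rw [add_sub_right_comm, inner_add_left, inner_smul_left, hv,
            EuclideanSpace.inner_single_left]
          simp; ring
        have hnv : ‖z + t • v - a‖ ^ 2 = ‖z - a‖ ^ 2 + 2 * t * (z - a) i + t ^ 2 := by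
          rw [add_sub_right_comm, norm_add_sq_real, inner_smul_right, norm_smul, hv,
            EuclideanSpace.inner_single_right]
          simp; ring
        simp only [hPdef, hh, hqv, hnv]
        ring
      · rw [← Finset.mul_sum, Finset.sum_sub_distrib, ← Finset.mul_sum,
          ← EuclideanSpace.real_norm_sq_eq, hν]
        simp; linarith
  have hFz₀ : 0 ≤ u z₀ + P z₀ := hFz.trans (hzmin hz₀V)
  have hhz₀ : h z₀ ≤ (d + 1) * ρ * q z₀ := by
    simp only [hh, hz₀a]
    have : 0 ≤ (d : ℝ) * q z₀ ^ 2 := by positivity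
    nlinarith
  have hKρ : K * ((d + 1) * ρ * q z₀) = m * (2 * (d + 1) * δ / R) * q z₀ := by
    rw [hK, hρ]; field_simp
  have : K * h z₀ ≤ K * ((d + 1) * ρ * q z₀) := by gcongr
  simp only [hPdef] at hFz₀
  change m * (1 - 2 * (d + 1) * δ / R) * q z₀ ≤ u z₀
  nlinarith

/-- The Hopf lemma at `x`: a positive harmonic function on the region `‖z‖ ω(‖z‖) < ⟪z, ν⟫`
(with `z` measured from `x`) grows at least linearly along `ν`, provided `ω` is summable over the
scales `r / 4 ^ k`. -/
lemma hopf_dini {u : Euc d → ℝ} {Ω : Set (Euc d)} (hΩ : IsOpen Ω) (hu : IsHarmonicOn u Ω)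
    (x ν : Euc d) (hν : ‖ν‖ = 1) (ω : ℝ → ℝ) (hω : ∀ t, 0 < t → 0 < ω t)
    (hmono : ∀ s t, 0 ≤ s → s ≤ t → ω s ≤ ω t) {r : ℝ} (hr : 0 < r)
    (hsum : Summable fun k : ℕ => ω (r / 4 ^ k))
    (hmem : ∀ z, ‖z - x‖ < r → ‖z - x‖ * ω ‖z - x‖ < ⟪z - x, ν⟫ → z ∈ Ω ∧ 0 < u z) :
    ∃ c > 0, ∀ ε > 0, ∃ t, 0 < t ∧ t < ε ∧ c * t ≤ u (x + t • ν) := by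
  have hνν : ⟪ν, ν⟫ = (1 : ℝ) := by rw [real_inner_self_eq_norm_sq, hν]; norm_num
  set T : ℕ → ℝ := fun k => r / 4 ^ k with hT
  have hT0 : ∀ k, 0 < T k := fun k => by simp only [hT]; positivity
  have hTs : ∀ k, T (k + 1) = T k / 4 := fun k => by simp only [hT, pow_succ]; field_simp
  have hTr : ∀ k, T k ≤ r := fun k => by
    simp only [hT]; exact div_le_self hr.le (one_le_pow₀ (by norm_num))
  set a : ℕ → ℝ := fun k => 8 * (d + 1) * ω (T k) with ha
  have ha0 : ∀ k, 0 < a k := fun k => by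
    have := hω _ (hT0 k); simp only [ha]; positivity
  have hasum : Summable a := hsum.mul_left _
  obtain ⟨n, hn⟩ := ((tendsto_sum_nat_add a).eventually (gt_mem_nhds
    (show (0 : ℝ) < 1 / 2 by norm_num))).exists
  have hasum' : Summable fun k => a (k + n) := (summable_nat_add_iff n).2 hasum
  have hS : ∀ k, ∑ j ∈ Finset.range k, a (j + n) ≤ 1 / 2 := fun k =>
    (hasum'.sum_le_tsum _ fun i _ => (ha0 _).le).trans hn.le
  have hωsmall : ∀ k, ω (T (k + n)) ≤ 1 / 16 := fun k => by
    have h1 : a (k + n) ≤ 1 / 2 := (hasum'.le_tsum k fun i _ => (ha0 _).le).trans hn.le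
    have h2 := hω _ (hT0 (k + n))
    simp only [ha] at h1
    have : 0 ≤ (d : ℝ) * ω (T (k + n)) := by positivity
    nlinarith
  set δ : ℕ → ℝ := fun k => T (k + n) * ω (T (k + n)) with hδ
  have hδ0 : ∀ k, 0 < δ k := fun k => mul_pos (hT0 _) (hω _ (hT0 _))
  set R : ℕ → ℝ := fun k => T (k + n + 1) with hR
  have hR0 : ∀ k, 0 < R k := fun k => hT0 _
  have hTR : ∀ k, T (k + n) = 4 * R k := fun k => by simp only [hR, hTs]; ring
  have hRs : ∀ k, R (k + 1) = R k / 4 := fun k => by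
    simp only [hR]; rw [← hTs]; congr 1; ring
  have hδs : ∀ k, δ (k + 1) = R k * ω (R k) := fun k => by
    simp only [hδ, hR]; rw [show k + 1 + n = k + n + 1 by ring]
  -- `hmem` in terms of half balls
  have hhalf : ∀ s, 0 < s → s ≤ r → ∀ z, ‖z - x‖ < s → s * ω s ≤ ⟪z - x, ν⟫ →
      z ∈ Ω ∧ 0 < u z := by
    intro s hs hsr z hz hz'
    refine hmem z (hz.trans_le hsr) (lt_of_lt_of_le ?_ hz')
    calc ‖z - x‖ * ω ‖z - x‖ ≤ ‖z - x‖ * ω s :=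
          mul_le_mul_of_nonneg_left (hmono _ _ (norm_nonneg _) hz.le) (norm_nonneg _)
      _ < s * ω s := mul_lt_mul_of_pos_right hz (hω s hs)
  -- the initial slope comes from compactness
  obtain ⟨m, hm, hbase⟩ : ∃ m > 0, ∀ z, ‖z - x‖ < R 0 → δ 0 ≤ ⟪z - x, ν⟫ →
      m * (⟪z - x, ν⟫ - δ 0) ≤ u z := by
    set V : Set (Euc d) := closedBall x (R 0) ∩ {z | δ 0 ≤ ⟪z - x, ν⟫} with hV
    have hVc : IsCompact V := (isCompact_closedBall x (R 0)).inter_right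
      (isClosed_le continuous_const (by fun_prop))
    have hVmem : ∀ z ∈ V, z ∈ Ω ∧ 0 < u z := by
      rintro z ⟨h1, h2⟩
      refine hhalf (T (0 + n)) (hT0 _) (hTr _) z ?_ h2
      rw [mem_closedBall, dist_eq_norm] at h1
      have := hTR 0
      linarith [hR0 0]
    have hVne : (x + R 0 • ν) ∈ V := by
      constructor
      · simp [norm_smul, hν, abs_of_pos (hR0 0)]
      · have h1 := hωsmall 0
        have h2 := hTR 0
        simp only [mem_ofPred_eq, add_sub_cancel_left, inner_smul_left, hνν, hδ, h2] at h1 ⊢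
        simp only [conj_trivial]
        nlinarith [hR0 0]
    obtain ⟨z₁, hz₁, hmin⟩ := hVc.exists_isMinOn ⟨_, hVne⟩
      (hu.1.continuousOn.mono fun z hz => (hVmem z hz).1)
    have hμ := (hVmem z₁ hz₁).2
    refine ⟨u z₁ / R 0, div_pos hμ (hR0 0), fun z hz hz' => ?_⟩
    have hzV : z ∈ V := ⟨by rw [mem_closedBall, dist_eq_norm]; exact hz.le, hz'⟩
    refine le_trans ?_ (hmin hzV)
    have h1 : ⟪z - x, ν⟫ ≤ R 0 := by
      have := real_inner_le_norm (z - x) ν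
      rw [hν, mul_one] at this
      linarith
    calc u z₁ / R 0 * (⟪z - x, ν⟫ - δ 0) ≤ u z₁ / R 0 * R 0 := by
          have := hδ0 0
          have := hR0 0
          gcongr; linarith
      _ = u z₁ := by have := hR0 0; field_simp
  have hiter : ∀ k, ∀ z, ‖z - x‖ < R k → δ k ≤ ⟪z - x, ν⟫ →
      m * (1 - ∑ j ∈ Finset.range k, a (j + n)) * (⟪z - x, ν⟫ - δ k) ≤ u z := by
    intro k
    induction k with
    | zero => simpa using hbase
    | succ k ih =>
      intro z hz hz'
      have hm' : 0 < m * (1 - ∑ j ∈ Finset.range k, a (j + n)) :=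
        mul_pos hm (by linarith [hS k])
      have hstep := hopf_step hΩ hu x ν hν (hδ0 k) (hδ0 (k + 1)) hm'
        (fun z hz hz' => by
          have := hhalf (R k) (hR0 k) (hTr _) z hz (by rwa [← hδs])
          exact ⟨this.1, this.2.le⟩) ih z (by rwa [← hRs]) hz'
      refine le_trans ?_ hstep
      have hak : 2 * ((d : ℝ) + 1) * δ k / R k = a (k + n) := by
        have := (hR0 k).ne'
        simp only [hδ, ha]
        rw [hTR k]; field_simp; ring
      rw [hak, Finset.sum_range_succ]
      refine mul_le_mul_of_nonneg_right ?_ (by linarith)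
      have hsum0 : 0 ≤ ∑ j ∈ Finset.range k, a (j + n) :=
        Finset.sum_nonneg fun j _ => (ha0 _).le
      have : 0 ≤ m * ((∑ j ∈ Finset.range k, a (j + n)) * a (k + n)) :=
        mul_nonneg hm.le (mul_nonneg hsum0 (ha0 _).le)
      nlinarith
  refine ⟨m / 4, by positivity, fun ε hε => ?_⟩
  have hRlim : Tendsto R atTop (𝓝 0) := by
    have h1 : Tendsto T atTop (𝓝 0) := by
      have := (tendsto_pow_atTop_nhds_zero_of_lt_one (r := (1 / 4 : ℝ)) (by norm_num)
        (by norm_num)).const_mul r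
      rw [mul_zero] at this
      refine this.congr fun k => ?_
      simp only [hT]; rw [one_div, inv_pow, div_eq_mul_inv]
    exact h1.comp (tendsto_add_atTop_nat (n + 1))
  obtain ⟨k, hk⟩ := (hRlim.eventually (gt_mem_nhds hε)).exists
  have hRk := hR0 k
  refine ⟨R k / 2, by positivity, by linarith, ?_⟩
  have hp : ⟪x + (R k / 2) • ν - x, ν⟫ = R k / 2 := by
    rw [add_sub_cancel_left, inner_smul_left, hνν]; simp
  have hδk : δ k ≤ R k / 4 := by
    simp only [hδ]
    have := hωsmall k
    rw [hTR] at this ⊢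
    nlinarith
  have hu' := hiter k (x + (R k / 2) • ν)
    (by rw [add_sub_cancel_left, norm_smul, hν, Real.norm_of_nonneg (by positivity)]; linarith)
    (by rw [hp]; linarith)
  rw [hp] at hu'
  refine le_trans ?_ hu'
  have h1 : m * (1 / 2) ≤ m * (1 - ∑ j ∈ Finset.range k, a (j + n)) := by
    gcongr; linarith [hS k]
  calc m / 4 * (R k / 2) = m * (1 / 2) * (R k / 4) := by ring
    _ ≤ m * (1 - ∑ j ∈ Finset.range k, a (j + n)) * (R k / 2 - δ k) := by
      gcongr
      · exact (by positivity : (0 : ℝ) ≤ m * (1 / 2)).trans h1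
      · linarith

lemma IsDiniModulus.exists_summable {θ : ℝ → ℝ} (hθ : IsDiniModulus θ) :
    ∃ δ > 0, ∀ r, 0 < r → r ≤ δ → Summable fun k : ℕ => θ (r / 4 ^ k) := by
  obtain ⟨h0, -, hmono, -, δ, hδ, hθint⟩ := hθ
  refine ⟨δ, hδ, fun r hr hrδ => ?_⟩
  have hintr : IntegrableOn (fun t => θ t / t) (Ioc 0 r) :=
    hθint.mono_set (Ioc_subset_Ioc_right hrδ)
  set T : ℕ → ℝ := fun k => r / 4 ^ k with hT
  have hT0 : ∀ k, 0 < T k := fun k => by simp only [hT]; positivity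
  have hTs : ∀ k, T (k + 1) = T k / 4 := fun k => by simp only [hT, pow_succ]; field_simp
  have hTr : ∀ k, T k ≤ r := fun k => by
    simp only [hT]; exact div_le_self hr.le (one_le_pow₀ (by norm_num))
  have hii : ∀ s t, 0 < s → s ≤ t → t ≤ r →
      IntervalIntegrable (fun t => θ t / t) volume s t := fun s t hs hst ht =>
    (intervalIntegrable_iff_integrableOn_Ioc_of_le hst).2
      (hintr.mono_set (Ioc_subset_Ioc hs.le ht))
  have hpiece : ∀ k, 3 / 4 * θ (T (k + 1)) ≤ ∫ t in T (k + 1)..T k, θ t / t := by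
    intro k
    have hle : T (k + 1) ≤ T k := by rw [hTs]; linarith [hT0 k]
    have h1 : ∫ _ in T (k + 1)..T k, θ (T (k + 1)) / T k = 3 / 4 * θ (T (k + 1)) := by
      rw [intervalIntegral.integral_const, smul_eq_mul, hTs]
      have := (hT0 k).ne'
      field_simp; ring
    rw [← h1]
    refine intervalIntegral.integral_mono_on hle (by simp) (hii _ _ (hT0 _) hle (hTr k)) ?_
    intro t ht
    have ht0 : 0 < t := (hT0 _).trans_le ht.1
    have := hmono (mem_Ici.2 (hT0 (k + 1)).le) (mem_Ici.2 ht0.le) ht.1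
    exact div_le_div₀ (h0 t) this ht0 ht.2
  have hpart : ∀ n, 3 / 4 * ∑ k ∈ Finset.range n, θ (T (k + 1)) ≤ ∫ t in T n..r, θ t / t := by
    intro n
    induction n with
    | zero => simp [hT]
    | succ n ih =>
      have hle : T (n + 1) ≤ T n := by rw [hTs]; linarith [hT0 n]
      rw [Finset.sum_range_succ, ← intervalIntegral.integral_add_adjacent_intervals
        (hii _ _ (hT0 _) hle (hTr n)) (hii _ _ (hT0 n) (hTr n) le_rfl)]
      linarith [hpiece n]
  have hbound : ∀ n, ∫ t in T n..r, θ t / t ≤ ∫ t in Ioc 0 r, θ t / t := by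
    intro n
    rw [intervalIntegral.integral_of_le (hTr n)]
    refine setIntegral_mono_set hintr ?_ (Ioc_subset_Ioc_left (hT0 n).le).eventuallyLE
    refine (ae_restrict_iff' measurableSet_Ioc).2 (Eventually.of_forall fun t ht => ?_)
    exact div_nonneg (h0 t) ht.1.le
  refine (summable_nat_add_iff 1).1 (summable_of_sum_range_le
    (c := 4 / 3 * ∫ t in Ioc 0 r, θ t / t) (fun n => h0 _) fun n => ?_)
  linarith [hpart n, hbound n]

/-! ### First-order behaviour at the boundary -/

lemma segment_estimate {u : Euc d → ℝ} {Ω : Set (Euc d)} (hΩ : IsOpen Ω)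
    (hu : ContDiffOn ℝ 2 u Ω) (huc : ContinuousOn u (closure Ω)) {a b g : Euc d} {η : ℝ}
    (ha : a ∈ closure Ω) (hb : b ∈ closure Ω)
    (hseg : ∀ s : ℝ, 0 < s → s < 1 → a + s • (b - a) ∈ Ω)
    (hg : ∀ s : ℝ, 0 < s → s < 1 → ‖gradient u (a + s • (b - a)) - g‖ ≤ η) :
    |u b - u a - ⟪g, b - a⟫| ≤ η * ‖b - a‖ := by
  have hline : ∀ s : ℝ, HasDerivAt (fun s : ℝ => a + s • (b - a)) (b - a) s := fun s => by
    simpa using ((hasDerivAt_id s).smul_const (b - a)).const_add a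
  have hcont : ContinuousOn (fun s : ℝ => u (a + s • (b - a))) (Icc 0 1) := by
    refine huc.comp (by fun_prop) fun s hs => ?_
    rcases hs.1.eq_or_lt with rfl | h0
    · simpa using ha
    rcases hs.2.eq_or_lt with rfl | h1
    · simpa using hb
    exact subset_closure (hseg s h0 h1)
  obtain ⟨s, hs, hslope⟩ := exists_hasDerivAt_eq_slope (fun s : ℝ => u (a + s • (b - a)))
    (fun s => ⟪gradient u (a + s • (b - a)), b - a⟫) zero_lt_one hcont fun s hs => by
      have h1 : DifferentiableAt ℝ u (a + s • (b - a)) :=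
        (hu.contDiffAt (hΩ.mem_nhds (hseg s hs.1 hs.2))).differentiableAt (by norm_num)
      rw [inner_gradient_left]
      exact h1.hasFDerivAt.comp_hasDerivAt s (hline s)
  have : u b - u a - ⟪g, b - a⟫ = ⟪gradient u (a + s • (b - a)) - g, b - a⟫ := by
    rw [inner_sub_left, hslope]; simp
  rw [this]
  exact (abs_real_inner_le_norm _ _).trans
    (mul_le_mul_of_nonneg_right (hg s hs.1 hs.2) (norm_nonneg _))

/-- The limit `g ≠ 0` of the gradient at a boundary point `x` near which `u` vanishes on the boundary
graph has a nonzero component in the graph direction `e`. Otherwise, moving from `x` to the boundary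
point above `x + t g` through `Ω` would change `u` by `t ‖g‖ ^ 2 + o(t)`. -/
lemma inner_gradient_limit_ne_zero {u : Euc d → ℝ} {Ω : Set (Euc d)} (hΩ : IsOpen Ω)
    (hu : ContDiffOn ℝ 2 u Ω) (huc : ContinuousOn u (closure Ω)) {x e : Euc d} {r : ℝ}
    (hr : 0 < r) (he : ‖e‖ = 1) {f : Euc d → ℝ}
    (hinv : ∀ (y : Euc d) (s : ℝ), f (y + s • e) = f y) (hf : DifferentiableAt ℝ f x)
    (hin : ∀ y ∈ ball x r, (y ∈ Ω ↔ f y < ⟪y, e⟫))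
    (hfr : ∀ y ∈ ball x r, (y ∈ frontier Ω ↔ ⟪y, e⟫ = f y))
    (hu0 : ∀ y ∈ ball x r, y ∈ frontier Ω → u y = 0) (hx : x ∈ frontier Ω) {g : Euc d}
    (hg : g ≠ 0)
    (hlim : ∀ η > 0, ∃ ρ > 0, ∀ y ∈ Ω, ‖y - x‖ < ρ → ‖gradient u y - g‖ ≤ η) :
    ⟪g, e⟫ ≠ (0 : ℝ) := by
  have hee : ⟪e, e⟫ = (1 : ℝ) := by rw [real_inner_self_eq_norm_sq, he]; norm_num
  have hfx : ⟪x, e⟫ = f x := (hfr x (mem_ball_self hr)).1 hx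
  have hse : ∀ (y : Euc d) (s : ℝ), ⟪y + s • e, e⟫ = ⟪y, e⟫ + s := fun y s => by
    rw [inner_add_left, inner_smul_left, hee]; simp
  obtain ⟨L, hL, hLO⟩ := hf.isBigO_sub.exists_pos
  obtain ⟨ρ₁, hρ₁, hLf⟩ := Metric.eventually_nhds_iff.1 hLO.bound
  have hLf : ∀ y, ‖y - x‖ < ρ₁ → |f y - f x| ≤ L * ‖y - x‖ := fun y hy =>
    hLf (by rwa [dist_eq_norm])
  have hux : u x = 0 := hu0 x (mem_ball_self hr) hx
  have hball : ∀ y, ‖y - x‖ < r → y ∈ ball x r := fun y hy => by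
    rwa [mem_ball, dist_eq_norm]
  intro hge
  have hgn : 0 < ‖g‖ := norm_pos_iff.2 hg
  set C : ℝ := 2 * L * ‖g‖ + 1 with hC
  set M : ℝ := 2 * C + ‖g‖ * (1 + L) with hM
  have hC0 : 0 < C := by positivity
  have hM0 : 0 < M := by positivity
  set η : ℝ := ‖g‖ ^ 2 / (2 * M) with hη
  have hη0 : 0 < η := by positivity
  obtain ⟨ρ, hρ, hgrad⟩ := hlim η hη0
  obtain ⟨t, ht0, ht⟩ : ∃ t : ℝ, 0 < t ∧ t * M < min r (min ρ ρ₁) := by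
    have hmin : 0 < min r (min ρ ρ₁) := lt_min hr (lt_min hρ hρ₁)
    refine ⟨min r (min ρ ρ₁) / (2 * M), by positivity, ?_⟩
    have : min r (min ρ ρ₁) / (2 * M) * M = min r (min ρ ρ₁) / 2 := by field_simp
    linarith
  have htr : t * M < r := ht.trans_le (min_le_left _ _)
  have htρ : t * M < ρ := ht.trans_le ((min_le_right _ _).trans (min_le_left _ _))
  have htρ₁ : t * M < ρ₁ := ht.trans_le ((min_le_right _ _).trans (min_le_right _ _))
  have hMg : ‖g‖ ≤ M := by
    have : 0 ≤ ‖g‖ * L := by positivity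
    simp only [hM]; nlinarith
  set τ : ℝ := C * t with hτ
  have hτ0 : 0 < τ := by positivity
  have hfs : ∀ s : ℝ, 0 ≤ s → s ≤ 1 →
      |f (x + (s * t) • g) - f x| ≤ L * (t * ‖g‖) := by
    intro s hs0 hs1
    have h1 : ‖x + (s * t) • g - x‖ ≤ t * ‖g‖ := by
      rw [add_sub_cancel_left, norm_smul, Real.norm_of_nonneg (by positivity)]
      have : s * t ≤ t := by nlinarith
      gcongr
    have h2 : t * ‖g‖ ≤ t * M := by gcongr
    refine (hLf _ (by linarith)).trans ?_
    gcongr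
  -- the boundary point above `x + t g`
  set κ : ℝ := f (x + t • g) - f x with hκ
  have hκb : |κ| ≤ L * (t * ‖g‖) := by simpa using hfs 1 zero_le_one le_rfl
  set b : Euc d := x + t • g + κ • e with hb
  have hbx : ‖b - x‖ ≤ t * ‖g‖ * (1 + L) := by
    have : b - x = t • g + κ • e := by rw [hb]; abel
    rw [this]
    refine (norm_add_le _ _).trans ?_
    rw [norm_smul, norm_smul, he, Real.norm_of_nonneg ht0.le, Real.norm_eq_abs]
    linarith
  have hMt : 2 * τ + t * ‖g‖ * (1 + L) = t * M := by simp only [hM, hτ]; ring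
  have hbr : ‖b - x‖ < r := by linarith
  have hbfr : b ∈ frontier Ω := by
    refine (hfr b (hball b hbr)).2 ?_
    rw [hb, hinv, hse, inner_add_left, inner_smul_left, hge, hfx, hκ]
    simp
  have hub : u b = 0 := hu0 b (hball b hbr) hbfr
  have hgb : ⟪g, b - x⟫ = t * ‖g‖ ^ 2 := by
    have : b - x = t • g + κ • e := by rw [hb]; abel
    rw [this, inner_add_right, inner_smul_right, inner_smul_right, hge,
      real_inner_self_eq_norm_sq]
    simp
  -- the part of the path `x → x + τ e → b + τ e → b` off its end points lies in `Ω`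
  have hvert : ∀ c : Euc d, ‖c - x‖ ≤ t * ‖g‖ * (1 + L) → ⟪c, e⟫ = f c → ∀ s : ℝ, 0 < s →
      s ≤ 1 → c + s • (c + τ • e - c) ∈ Ω ∧ ‖c + s • (c + τ • e - c) - x‖ < ρ := by
    intro c hc hcf s hs0 hs1
    have hnorm : ‖c + s • (c + τ • e - c) - x‖ < t * M := by
      have : c + s • (c + τ • e - c) - x = (c - x) + (s * τ) • e := by
        rw [add_sub_cancel_left, smul_smul]; abel
      rw [this]
      refine (norm_add_le _ _).trans_lt ?_
      rw [norm_smul, he, Real.norm_of_nonneg (by positivity)]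
      have := mul_le_of_le_one_left hτ0.le hs1
      linarith
    refine ⟨(hin _ (hball _ (hnorm.trans htr))).2 ?_, hnorm.trans htρ⟩
    rw [add_sub_cancel_left, smul_smul, hinv, hse, hcf]
    have : 0 < s * τ := by positivity
    linarith
  have hx0 : ‖x - x‖ ≤ t * ‖g‖ * (1 + L) := by rw [sub_self, norm_zero]; positivity
  have hbf : ⟪b, e⟫ = f b := (hfr b (hball b hbr)).1 hbfr
  have hxτ : x + τ • e ∈ Ω := by
    simpa using (hvert x hx0 hfx 1 one_pos le_rfl).1
  have hbτ : b + τ • e ∈ Ω := by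
    simpa using (hvert b hbx hbf 1 one_pos le_rfl).1
  have hmid : ∀ s : ℝ, 0 < s → s < 1 →
      x + τ • e + s • (b + τ • e - (x + τ • e)) ∈ Ω ∧
      ‖x + τ • e + s • (b + τ • e - (x + τ • e)) - x‖ < ρ := by
    intro s hs0 hs1
    have hrep : x + τ • e + s • (b + τ • e - (x + τ • e)) =
        x + (s * t) • g + (τ + s * κ) • e := by
      rw [hb]; module
    have hnorm : ‖x + τ • e + s • (b + τ • e - (x + τ • e)) - x‖ < t * M := by
      have : x + τ • e + s • (b + τ • e - (x + τ • e)) - x = τ • e + s • (b - x) := by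
        module
      rw [this]
      refine (norm_add_le _ _).trans_lt ?_
      rw [norm_smul, norm_smul, he, Real.norm_of_nonneg hτ0.le, Real.norm_of_nonneg hs0.le]
      have := mul_le_of_le_one_left (norm_nonneg (b - x)) hs1.le
      linarith
    refine ⟨(hin _ (hball _ (hnorm.trans htr))).2 ?_, hnorm.trans htρ⟩
    rw [hrep, hinv, hse, inner_add_left, inner_smul_left, hge, hfx]
    have h1 := (abs_le.1 (hfs s hs0.le hs1.le)).2
    have h2 : -(L * (t * ‖g‖)) ≤ s * κ := by
      have h3 : 0 ≤ L * (t * ‖g‖) := by positivity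
      have h5 := mul_le_mul_of_nonneg_left (abs_le.1 hκb).1 hs0.le
      have h6 := mul_le_of_le_one_left h3 hs1.le
      linarith
    have h4 : τ = 2 * (L * (t * ‖g‖)) + t := by simp only [hτ, hC]; ring
    simp only [mul_zero]
    linarith
  have hcl := frontier_subset_closure (s := Ω)
  have e1 := segment_estimate hΩ hu huc (hcl hx) (subset_closure hxτ)
    (fun s h0 h1 => (hvert x hx0 hfx s h0 h1.le).1)
    (fun s h0 h1 => hgrad _ (hvert x hx0 hfx s h0 h1.le).1 (hvert x hx0 hfx s h0 h1.le).2)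
  have e2 := segment_estimate hΩ hu huc (subset_closure hxτ) (subset_closure hbτ)
    (fun s h0 h1 => (hmid s h0 h1).1) (fun s h0 h1 => hgrad _ (hmid s h0 h1).1 (hmid s h0 h1).2)
  have e3 := segment_estimate hΩ hu huc (hcl hbfr) (subset_closure hbτ)
    (fun s h0 h1 => (hvert b hbx hbf s h0 h1.le).1)
    (fun s h0 h1 => hgrad _ (hvert b hbx hbf s h0 h1.le).1 (hvert b hbx hbf s h0 h1.le).2)
  rw [add_sub_cancel_left, inner_smul_right, hge, norm_smul, he, mul_one,
    Real.norm_of_nonneg hτ0.le, hux] at e1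
  rw [add_sub_cancel_left, inner_smul_right, hge, norm_smul, he, mul_one,
    Real.norm_of_nonneg hτ0.le, hub] at e3
  rw [add_sub_add_right_eq_sub, hgb] at e2
  have h1 := (abs_le.1 e1).2
  have h2 := (abs_le.1 e2).1
  have h3 := (abs_le.1 e3).1
  have h2' := (abs_le.1 e2).2
  have h1' := (abs_le.1 e1).1
  have h3' := (abs_le.1 e3).2
  have h4 : η * ‖b - x‖ ≤ η * (t * ‖g‖ * (1 + L)) := by gcongr
  have h5 : η * (t * M) = t * ‖g‖ ^ 2 / 2 := by rw [hη]; field_simp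
  have h6 : 0 < t * ‖g‖ ^ 2 := by positivity
  rw [← hMt] at h5
  linarith

/-- If the gradient has a nonzero limit `g` at a boundary point `x` near which `u` vanishes on the
boundary graph, then `u` has no zeros in `Ω` near `x`: the limit `g` must have a nonzero vertical
component, and `u` is strictly monotone in the vertical direction. -/
lemma ne_zero_near_of_gradient_ne_zero {u : Euc d → ℝ} {Ω : Set (Euc d)} (hΩ : IsOpen Ω)
    (hu : ContDiffOn ℝ 2 u Ω) (huc : ContinuousOn u (closure Ω)) {x e : Euc d} {r : ℝ}
    (hr : 0 < r) (he : ‖e‖ = 1) {f : Euc d → ℝ}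
    (hinv : ∀ (y : Euc d) (s : ℝ), f (y + s • e) = f y) (hf : DifferentiableAt ℝ f x)
    (hin : ∀ y ∈ ball x r, (y ∈ Ω ↔ f y < ⟪y, e⟫))
    (hfr : ∀ y ∈ ball x r, (y ∈ frontier Ω ↔ ⟪y, e⟫ = f y))
    (hu0 : ∀ y ∈ ball x r, y ∈ frontier Ω → u y = 0) (hx : x ∈ frontier Ω) {g : Euc d}
    (hg : g ≠ 0)
    (hlim : ∀ η > 0, ∃ ρ > 0, ∀ y ∈ Ω, ‖y - x‖ < ρ → ‖gradient u y - g‖ ≤ η) :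
    ∃ ρ > 0, ∀ y ∈ Ω, ‖y - x‖ < ρ → u y ≠ 0 := by
  have hee : ⟪e, e⟫ = (1 : ℝ) := by rw [real_inner_self_eq_norm_sq, he]; norm_num
  have hfx : ⟪x, e⟫ = f x := (hfr x (mem_ball_self hr)).1 hx
  have hse : ∀ (y : Euc d) (s : ℝ), ⟪y + s • e, e⟫ = ⟪y, e⟫ + s := fun y s => by
    rw [inner_add_left, inner_smul_left, hee]; simp
  obtain ⟨L, hL, hLO⟩ := hf.isBigO_sub.exists_pos
  obtain ⟨ρ₁, hρ₁, hLf⟩ := Metric.eventually_nhds_iff.1 hLO.bound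
  have hLf : ∀ y, ‖y - x‖ < ρ₁ → |f y - f x| ≤ L * ‖y - x‖ := fun y hy =>
    hLf (by rwa [dist_eq_norm])
  have hball : ∀ y, ‖y - x‖ < r → y ∈ ball x r := fun y hy => by
    rwa [mem_ball, dist_eq_norm]
  have hge : ⟪g, e⟫ ≠ (0 : ℝ) :=
    inner_gradient_limit_ne_zero hΩ hu huc hr he hinv hf hin hfr hu0 hx hg hlim
  set c : ℝ := ⟪g, e⟫ with hc
  obtain ⟨ρ, hρ, hgrad⟩ := hlim (|c| / 2) (by positivity)
  have hmin : 0 < min r (min ρ ρ₁) := lt_min hr (lt_min hρ hρ₁)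
  refine ⟨min r (min ρ ρ₁) / (2 + L), by positivity, fun y hy hyx huy => ?_⟩
  rw [lt_div_iff₀ (by positivity)] at hyx
  have hn := norm_nonneg (y - x)
  have hLn : 0 ≤ ‖y - x‖ * L := by positivity
  have hyr := hyx.trans_le (min_le_left _ _)
  have hyρ := hyx.trans_le ((min_le_right _ _).trans (min_le_left _ _))
  have hyρ₁ := hyx.trans_le ((min_le_right _ _).trans (min_le_right _ _))
  -- `y` lies at height `σ` above the boundary point `b`
  set σ : ℝ := ⟪y, e⟫ - f y with hσ
  have hσ0 : 0 < σ := by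
    have := (hin y (hball y (by linarith))).1 hy
    simp only [hσ]; linarith
  have hσle : σ ≤ ‖y - x‖ * (1 + L) := by
    have h1 : ⟪y, e⟫ - ⟪x, e⟫ ≤ ‖y - x‖ := by
      rw [← inner_sub_left]
      simpa [he] using real_inner_le_norm (y - x) e
    have h2 := (abs_le.1 (hLf y (by linarith))).1
    simp only [hσ]; linarith
  set b : Euc d := y + (-σ) • e with hb
  have hpt : ∀ s : ℝ, 0 ≤ s → s ≤ 1 → ‖b + s • (y - b) - x‖ ≤ ‖y - x‖ * (2 + L) := by
    intro s h0 h1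
    have : b + s • (y - b) - x = (y - x) + (-((1 - s) * σ)) • e := by rw [hb]; module
    rw [this]
    refine (norm_add_le _ _).trans ?_
    have hs : 0 ≤ 1 - s := by linarith
    rw [norm_smul, he, norm_neg, Real.norm_of_nonneg (by positivity)]
    nlinarith
  have hbx : ‖b - x‖ < r := by
    have := hpt 0 le_rfl zero_le_one
    rw [zero_smul, add_zero] at this
    linarith
  have hbfr : b ∈ frontier Ω := by
    refine (hfr b (hball b hbx)).2 ?_
    rw [hb, hinv, hse, hσ]; ring
  have hsegΩ : ∀ s : ℝ, 0 < s → s < 1 → b + s • (y - b) ∈ Ω := by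
    intro s h0 h1
    refine (hin _ (hball _ ((hpt s h0.le h1.le).trans_lt hyr))).2 ?_
    have : b + s • (y - b) = y + (-σ + s * σ) • e := by rw [hb]; module
    rw [this, hinv, hse, hσ]
    have : 0 < s * σ := by positivity
    rw [hσ] at this
    linarith
  have key := segment_estimate hΩ hu huc (frontier_subset_closure hbfr) (subset_closure hy)
    hsegΩ (fun s h0 h1 => hgrad _ (hsegΩ s h0 h1) ((hpt s h0.le h1.le).trans_lt hyρ))
  have hyb : y - b = σ • e := by rw [hb]; module
  rw [hyb, huy, hu0 b (hball b hbx) hbfr, inner_smul_right, ← hc, norm_smul, he,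
    Real.norm_of_nonneg hσ0.le, sub_zero, zero_sub, abs_neg, abs_mul, abs_of_pos hσ0] at key
  have : 0 < σ * |c| := by positivity
  linarith

/-! ### Zeros near singular boundary points -/

lemma IsHarmonicOn.fun_neg {u : Euc d → ℝ} {Ω : Set (Euc d)} (hu : IsHarmonicOn u Ω) :
    IsHarmonicOn (fun y => -u y) Ω := by
  refine ⟨hu.1.neg, fun x hx => ?_⟩
  have h := hu.2 x hx
  simp only [fderiv_fun_neg, neg_apply, Finset.sum_neg_distrib, h, neg_zero]

lemma ray_mem_region {x ν : Euc d} (hν : ‖ν‖ = 1) {ω : ℝ → ℝ}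
    (hmono : ∀ s t, 0 ≤ s → s ≤ t → ω s ≤ ω t) {r : ℝ} (hω1 : ω r < 1) {t : ℝ} (ht : 0 < t)
    (htr : t < r) :
    x + t • ν ∈ {z | ‖z - x‖ < r ∧ ‖z - x‖ * ω ‖z - x‖ < ⟪z - x, ν⟫} := by
  have hνν : ⟪ν, ν⟫ = (1 : ℝ) := by rw [real_inner_self_eq_norm_sq, hν]; norm_num
  have hn : ‖x + t • ν - x‖ = t := by
    rw [add_sub_cancel_left, norm_smul, hν, Real.norm_of_nonneg ht.le, mul_one]
  have hp : ⟪x + t • ν - x, ν⟫ = t := by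
    rw [add_sub_cancel_left, inner_smul_left, hνν]; simp
  simp only [mem_ofPred_eq, hn, hp]
  have := hmono t r ht.le htr.le
  exact ⟨htr, by nlinarith⟩

lemma isPreconnected_region {x ν : Euc d} (hν : ‖ν‖ = 1) {ω : ℝ → ℝ} (hω : ∀ t, 0 ≤ t → 0 ≤ ω t)
    (hmono : ∀ s t, 0 ≤ s → s ≤ t → ω s ≤ ω t) {r : ℝ} (hω1 : ω r < 1) :
    IsPreconnected {z | ‖z - x‖ < r ∧ ‖z - x‖ * ω ‖z - x‖ < ⟪z - x, ν⟫} := by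
  have hνν : ⟪ν, ν⟫ = (1 : ℝ) := by rw [real_inner_self_eq_norm_sq, hν]; norm_num
  -- every point `z` is joined to the point of the axis at the same distance from `x`
  refine isPreconnected_of_forall (x + (r / 2) • ν) fun z hz => ?_
  obtain ⟨hzr, hz⟩ := hz
  have hpz : ⟪z - x, ν⟫ ≤ ‖z - x‖ := by simpa [hν] using real_inner_le_norm (z - x) ν
  have hz0 : 0 < ‖z - x‖ := by
    have := mul_nonneg (norm_nonneg (z - x)) (hω _ (norm_nonneg (z - x)))
    linarith
  set y : Euc d := x + ‖z - x‖ • ν with hy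
  set A : Set (Euc d) := closedBall x ‖z - x‖ ∩ {w | ⟪z, ν⟫ ≤ ⟪w, ν⟫} with hA
  set S : Set (Euc d) := image (fun t : ℝ => x + t • ν) (Ioo 0 r) with hS
  have hyA : y ∈ A := by
    refine ⟨?_, ?_⟩
    · simp [hy, norm_smul, hν]
    · rw [inner_sub_left] at hpz
      simp only [hy, mem_ofPred_eq, inner_add_left, inner_smul_left, hνν]
      simp only [conj_trivial]
      linarith
  have hAc : IsPreconnected A := by
    refine Convex.isPreconnected ((convex_closedBall x _).inter (convex_halfSpace_ge ?_ _))
    exact ⟨fun a b => inner_add_left _ _ _, fun c a => by rw [inner_smul_left]; simp⟩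
  have hSc : IsPreconnected S := isPreconnected_Ioo.image _ (by fun_prop)
  refine ⟨A ∪ S, ?_, Or.inr ⟨r / 2, ⟨by linarith, by linarith⟩, rfl⟩,
    Or.inl ⟨by simp [dist_eq_norm], by simp⟩,
    hAc.union y hyA ⟨‖z - x‖, ⟨hz0, hzr⟩, rfl⟩ hSc⟩
  rintro w (⟨hw1, hw2⟩ | ⟨t, ht, rfl⟩)
  · rw [mem_closedBall, dist_eq_norm] at hw1
    refine ⟨hw1.trans_lt hzr, ?_⟩
    have h1 : ‖w - x‖ * ω ‖w - x‖ ≤ ‖z - x‖ * ω ‖z - x‖ :=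
      mul_le_mul hw1 (hmono _ _ (norm_nonneg _) hw1) (hω _ (norm_nonneg _)) (norm_nonneg _)
    have h2 : ⟪z - x, ν⟫ ≤ ⟪w - x, ν⟫ := by
      rw [inner_sub_left, inner_sub_left]
      simp only [mem_ofPred_eq] at hw2
      linarith
    linarith
  · exact ray_mem_region hν hmono hω1 ht.1 ht.2

/-- Near a boundary point at which the gradient tends to zero, `u` has zeros in `Ω`: otherwise `u`
has constant sign on a region of the kind covered by `hopf_dini`, whose linear growth contradicts
the vanishing of the gradient. -/
lemma exists_zero_near_of_gradient_eq_zero {u : Euc d → ℝ} {Ω : Set (Euc d)} (hΩ : IsOpen Ω)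
    (hu : IsHarmonicOn u Ω) (huc : ContinuousOn u (closure Ω)) {x e : Euc d} {r : ℝ}
    (hr : 0 < r) (he : ‖e‖ = 1) {f : Euc d → ℝ} {θ : ℝ → ℝ} (hθ : IsDiniModulus θ)
    (hinv : ∀ (y : Euc d) (s : ℝ), f (y + s • e) = f y) (hf : Differentiable ℝ f)
    (hfθ : ∀ y z : Euc d, ‖fderiv ℝ f y - fderiv ℝ f z‖ ≤ θ ‖y - z‖)
    (hin : ∀ y ∈ ball x r, (y ∈ Ω ↔ f y < ⟪y, e⟫)) (hfx : ⟪x, e⟫ = f x)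
    (hx : x ∈ closure Ω) (hux : u x = 0)
    (hlim : ∀ η > 0, ∃ ρ > 0, ∀ y ∈ Ω, ‖y - x‖ < ρ → ‖gradient u y‖ ≤ η)
    {ρ : ℝ} (hρ : 0 < ρ) : ∃ y ∈ Ω, ‖y - x‖ < ρ ∧ u y = 0 := by
  by_contra! hne
  obtain ⟨δ, hδ, hsummable⟩ := hθ.exists_summable
  obtain ⟨hθ0, hθz, hθm, hθc, -⟩ := hθ
  have hee : ⟪e, e⟫ = (1 : ℝ) := by rw [real_inner_self_eq_norm_sq, he]; norm_num
  -- the interior normal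
  set N : Euc d := e - gradient f x with hN
  have hNe : ⟪N, e⟫ = (1 : ℝ) := by
    have h1 : HasDerivAt (fun s : ℝ => f (x + s • e)) (fderiv ℝ f x e) 0 := by
      have hl : HasDerivAt (fun s : ℝ => x + s • e) e 0 := by
        simpa using ((hasDerivAt_id (0 : ℝ)).smul_const e).const_add x
      have h2 : HasFDerivAt f (fderiv ℝ f x) (x + (0 : ℝ) • e) := by
        rw [zero_smul, add_zero]; exact (hf x).hasFDerivAt
      exact h2.comp_hasDerivAt 0 hl
    have h3 : (fun s : ℝ => f (x + s • e)) = fun _ => f x := funext fun s => hinv x s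
    rw [h3] at h1
    have h4 := h1.unique (hasDerivAt_const (0 : ℝ) (f x))
    rw [hN, inner_sub_left, inner_gradient_left, hee, h4, sub_zero]
  have hN1 : 1 ≤ ‖N‖ := by
    have := real_inner_le_norm N e
    rwa [hNe, he, mul_one] at this
  set ν : Euc d := ‖N‖⁻¹ • N with hν
  have hν1 : ‖ν‖ = 1 := by
    rw [hν, norm_smul, norm_inv, norm_norm]
    field_simp
  have hNν : N = ‖N‖ • ν := by
    rw [hν, smul_smul, mul_inv_cancel₀ (by linarith), one_smul]
  -- adding the identity makes the modulus strictly positive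
  set ω : ℝ → ℝ := fun t => θ t + t with hω
  have hω0 : ∀ t, 0 < t → 0 < ω t := fun t ht => by simp only [hω]; linarith [hθ0 t]
  have hmono : ∀ s t, 0 ≤ s → s ≤ t → ω s ≤ ω t := fun s t hs hst => by
    have := hθm (mem_Ici.2 hs) (mem_Ici.2 (hs.trans hst)) hst
    simp only [hω]; linarith
  obtain ⟨δ₂, hδ₂, hθδ₂⟩ : ∃ δ₂ > 0, ∀ t, 0 ≤ t → t < δ₂ → θ t < 1 / 2 := by
    have h1 : ∀ᶠ t in 𝓝[≥] (0 : ℝ), θ t < 1 / 2 :=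
      hθc.eventually (gt_mem_nhds (by rw [hθz]; norm_num))
    obtain ⟨δ₂, hδ₂, h2⟩ := Metric.eventually_nhds_iff.1 (eventually_nhdsWithin_iff.1 h1)
    exact ⟨δ₂, hδ₂, fun t h0 h1 => h2 (by simpa [abs_of_nonneg h0] using h1) h0⟩
  obtain ⟨R, hR, hRr, hRρ, hRδ, hRδ₂, hR4⟩ :
      ∃ R : ℝ, 0 < R ∧ R ≤ r ∧ R ≤ ρ ∧ R ≤ δ ∧ R < δ₂ ∧ R ≤ 1 / 4 := by
    refine ⟨min r (min ρ (min δ (min (δ₂ / 2) (1 / 4)))), by positivity, ?_⟩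
    refine ⟨by simp, by simp, by simp, ?_, by simp⟩
    have : min r (min ρ (min δ (min (δ₂ / 2) (1 / 4)))) ≤ δ₂ / 2 := by simp
    linarith
  have hω1 : ω R < 1 := by
    have := hθδ₂ R hR.le hRδ₂
    simp only [hω]; linarith
  have hsum : Summable fun k : ℕ => ω (R / 4 ^ k) := by
    refine (hsummable R hR hRδ).add ?_
    have := (summable_geometric_of_lt_one (r := (1 / 4 : ℝ)) (by norm_num)
      (by norm_num)).mul_left R
    refine this.congr fun k => ?_
    rw [one_div, inv_pow, div_eq_mul_inv]
  set W : Set (Euc d) := {z | ‖z - x‖ < R ∧ ‖z - x‖ * ω ‖z - x‖ < ⟪z - x, ν⟫} with hW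
  have hWΩ : W ⊆ Ω := by
    rintro z ⟨hz1, hz2⟩
    refine (hin z (by rw [mem_ball, dist_eq_norm]; linarith)).2 ?_
    have htaylor := Convex.norm_image_sub_le_of_norm_fderiv_le' (f := f) (C := θ ‖z - x‖)
      (s := closedBall x ‖z - x‖) (x := x) (y := z) (φ := fderiv ℝ f x) (fun y _ => hf y)
      (fun y hy => (hfθ y x).trans (hθm (mem_Ici.2 (norm_nonneg _)) (mem_Ici.2 (norm_nonneg _))
        (by rwa [mem_closedBall, dist_eq_norm] at hy)))
      (convex_closedBall _ _) (by simp) (by simp [dist_eq_norm])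
    have h1 := (abs_le.1 htaylor).2
    have h2 : ⟪z - x, N⟫ = ⟪z, e⟫ - ⟪x, e⟫ - fderiv ℝ f x (z - x) := by
      rw [hN, inner_sub_right, inner_sub_left, ← inner_gradient_left, real_inner_comm (z - x)]
    have h3 : ⟪z - x, N⟫ = ‖N‖ * ⟪z - x, ν⟫ := by
      conv_lhs => rw [hNν]
      rw [inner_smul_right]
    have hn := norm_nonneg (z - x)
    have h4 : θ ‖z - x‖ * ‖z - x‖ ≤ ‖z - x‖ * ω ‖z - x‖ := by
      simp only [hω]; nlinarith
    have h5 : 0 ≤ θ ‖z - x‖ * ‖z - x‖ := mul_nonneg (hθ0 _) hn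
    have h6 : ⟪z - x, ν⟫ ≤ ‖N‖ * ⟪z - x, ν⟫ :=
      le_mul_of_one_le_left (by linarith) hN1
    linarith
  have hWne : ∀ z ∈ W, u z ≠ 0 := fun z hz => hne z (hWΩ hz) (hz.1.trans_le hRρ)
  have hWconn : IsPreconnected W := isPreconnected_region hν1
    (fun t ht => add_nonneg (hθ0 t) ht) hmono hω1
  have hcW : ContinuousOn u W := hu.1.continuousOn.mono hWΩ
  -- `u` has constant sign on `W`
  have hsign : (∀ z ∈ W, 0 < u z) ∨ (∀ z ∈ W, 0 < -u z) := by
    by_contra! hcon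
    obtain ⟨⟨z₁, h₁, h₁'⟩, ⟨z₂, h₂, h₂'⟩⟩ := hcon
    obtain ⟨z, hz, hz0⟩ := hWconn.intermediate_value h₁ h₂ hcW ⟨h₁', neg_nonpos.1 h₂'⟩
    exact hWne z hz hz0
  obtain ⟨c, hc, hgrow⟩ : ∃ c > 0, ∀ ε > 0, ∃ t, 0 < t ∧ t < ε ∧ c * t ≤ |u (x + t • ν)| := by
    rcases hsign with h | h
    · obtain ⟨c, hc, hgrow⟩ := hopf_dini hΩ hu x ν hν1 ω hω0 hmono hR hsum
        fun z h1 h2 => ⟨hWΩ ⟨h1, h2⟩, h z ⟨h1, h2⟩⟩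
      refine ⟨c, hc, fun ε hε => ?_⟩
      obtain ⟨t, h1, h2, h3⟩ := hgrow ε hε
      exact ⟨t, h1, h2, h3.trans (le_abs_self _)⟩
    · obtain ⟨c, hc, hgrow⟩ := hopf_dini hΩ hu.fun_neg x ν hν1 ω hω0 hmono hR hsum
        fun z h1 h2 => ⟨hWΩ ⟨h1, h2⟩, h z ⟨h1, h2⟩⟩
      refine ⟨c, hc, fun ε hε => ?_⟩
      obtain ⟨t, h1, h2, h3⟩ := hgrow ε hε
      exact ⟨t, h1, h2, h3.trans (neg_le_abs _)⟩
  obtain ⟨ρ', hρ', hgrad⟩ := hlim (c / 2) (by positivity)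
  obtain ⟨t, ht0, ht, hct⟩ := hgrow (min R ρ') (lt_min hR hρ')
  have htR := ht.trans_le (min_le_left _ _)
  have htρ := ht.trans_le (min_le_right _ _)
  have hray : ∀ s : ℝ, 0 < s → s ≤ 1 → x + s • (x + t • ν - x) ∈ Ω ∧
      ‖x + s • (x + t • ν - x) - x‖ < ρ' := by
    intro s h0 h1
    have hst : s * t ≤ t := mul_le_of_le_one_left ht0.le h1
    have hst0 : 0 < s * t := by positivity
    rw [add_sub_cancel_left, smul_smul]
    refine ⟨hWΩ (ray_mem_region hν1 hmono hω1 hst0 (by linarith)), ?_⟩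
    rw [add_sub_cancel_left, norm_smul, hν1, Real.norm_of_nonneg hst0.le]
    linarith
  have hend : x + t • ν ∈ Ω := by simpa using (hray 1 one_pos le_rfl).1
  have key := segment_estimate hΩ hu.1 huc hx (subset_closure hend) (g := 0) (η := c / 2)
    (fun s h0 h1 => (hray s h0 h1.le).1)
    (fun s h0 h1 => by
      rw [sub_zero]; exact hgrad _ (hray s h0 h1.le).1 (hray s h0 h1.le).2)
  rw [hux, sub_zero, inner_zero_left, sub_zero, add_sub_cancel_left, norm_smul, hν1,
    Real.norm_of_nonneg ht0.le, mul_one] at key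
  have : 0 < c * t := by positivity
  linarith

/-- **Proposition 1.8.** In a `C^{1,Dini}` domain, for a harmonic function `u` vanishing on
`Σ = B ∩ ∂Ω`, the singular set `𝒮_Σ(u) = {x ∈ Σ : |∇u(x)| = 0}` (defined through the continuous
extension `G` of `∇u` up to `Σ`) coincides with
`𝒮'_Σ(u) = {x ∈ Σ : u⁻¹({0}) ∩ B(x,r) ∩ Ω ≠ ∅ for all r > 0}`. -/
theorem singular_set_eq_sign_change_set (d : ℕ)
    (Ω : Set (Euc d)) (hΩ : IsC1DiniDomain Ω)
    (x₀ : Euc d) (hx₀ : x₀ ∈ frontier Ω) (r₀ : ℝ) (hr₀ : 0 < r₀)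
    (u : Euc d → ℝ) (hu : IsHarmonicOn u Ω)
    (huc : ContinuousOn u (closure Ω))
    (hu0 : ∀ x ∈ ball x₀ r₀ ∩ frontier Ω, u x = 0)
    (G : Euc d → Euc d)
    (hGcont : ContinuousOn G (Ω ∪ (ball x₀ r₀ ∩ frontier Ω)))
    (hGu : ∀ x ∈ Ω, G x = gradient u x) :
    {x ∈ ball x₀ r₀ ∩ frontier Ω | G x = 0} =
      {x ∈ ball x₀ r₀ ∩ frontier Ω |
        ∀ r : ℝ, 0 < r → (u ⁻¹' {0} ∩ ball x r ∩ Ω).Nonempty} := by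
  ext x
  simp only [mem_ofPred_eq, and_congr_right_iff]
  rintro ⟨hxB, hxfr⟩
  obtain ⟨hΩo, -, hloc⟩ := hΩ
  obtain ⟨r, e, f, θ, hr, he, hθ, hproj, hf, hfθ, hin, hfr⟩ := hloc x hxfr
  have hee : ⟪e, e⟫ = (1 : ℝ) := by rw [real_inner_self_eq_norm_sq, he]; norm_num
  have hinv : ∀ (y : Euc d) (s : ℝ), f (y + s • e) = f y := fun y s => by
    refine hproj _ _ ?_
    rw [inner_add_left, inner_smul_left, hee]
    simp only [conj_trivial, mul_one]
    module
  obtain ⟨r₁, hr₁, hr₁B⟩ := Metric.isOpen_iff.1 isOpen_ball x hxB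
  set R : ℝ := min r r₁ with hR
  have hR0 : 0 < R := lt_min hr hr₁
  have hRr : ball x R ⊆ ball x r := ball_subset_ball (min_le_left _ _)
  have hRB : ball x R ⊆ ball x₀ r₀ := (ball_subset_ball (min_le_right _ _)).trans hr₁B
  have hlim : ∀ η > 0, ∃ ρ > 0, ∀ y ∈ Ω, ‖y - x‖ < ρ → ‖gradient u y - G x‖ ≤ η := by
    intro η hη
    obtain ⟨ρ, hρ, h⟩ := Metric.continuousWithinAt_iff.1 (hGcont x (Or.inr ⟨hxB, hxfr⟩)) η hη
    refine ⟨ρ, hρ, fun y hy hyx => ?_⟩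
    have := h (Or.inl hy) (by rwa [dist_eq_norm])
    rw [dist_eq_norm, hGu y hy] at this
    exact this.le
  have hux : u x = 0 := hu0 x ⟨hxB, hxfr⟩
  constructor
  · intro hG ρ hρ
    rw [hG] at hlim
    simp only [sub_zero] at hlim
    obtain ⟨y, hy, hyx, huy⟩ := exists_zero_near_of_gradient_eq_zero hΩo hu huc hR0 he hθ hinv hf
      hfθ (fun y hy => hin y (hRr hy)) ((hfr x (mem_ball_self hr)).1 hxfr)
      (frontier_subset_closure hxfr) hux hlim hρ
    exact ⟨y, ⟨huy, by rwa [mem_ball, dist_eq_norm]⟩, hy⟩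
  · intro hzeros
    by_contra hG
    obtain ⟨ρ, hρ, h⟩ := ne_zero_near_of_gradient_ne_zero hΩo hu.1 huc hR0 he hinv (hf x)
      (fun y hy => hin y (hRr hy)) (fun y hy => hfr y (hRr hy))
      (fun y hy hy' => hu0 y ⟨hRB hy, hy'⟩) hxfr hG hlim
    obtain ⟨y, ⟨huy, hyρ⟩, hy⟩ := hzeros ρ hρ
    exact h y hy (by rwa [mem_ball, dist_eq_norm] at hyρ) huy
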